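/- Let ℓ ≥ 5 be prime and let H be a closed subgroup of SL₂(ℤ_ℓ) whose image under the composite SL₂(ℤ_ℓ) → SL₂(𝔽_ℓ) → PSL₂(𝔽_ℓ) is all of PSL₂(𝔽_ℓ). Then H = SL₂(ℤ_ℓ). -/

import Mathlib

open Matrix

/-- The special linear group over a topological ring carries the subspace topology. -/
instance specialLinearGroupTopology (n : Type*) [DecidableEq n] [Fintype n]
    (R : Type*) [CommRing R] [TopologicalSpace R] :
    TopologicalSpace (Matrix.SpecialLinearGroup n R) :=
  inferInstanceAs (TopologicalSpace {A : Matrix n n R // A.det = 1})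

/-- The composite `SL₂(ℤ_ℓ) → SL₂(𝔽_ℓ) → PSL₂(𝔽_ℓ)` of reduction mod `ℓ` with the projection
onto `PSL₂(𝔽_ℓ) = SL₂(𝔽_ℓ)/{±1}` (the quotient by the centre). -/
noncomputable def toPSL (ℓ : ℕ) [Fact (Nat.Prime ℓ)] :
    Matrix.SpecialLinearGroup (Fin 2) ℤ_[ℓ] →*
      Matrix.SpecialLinearGroup (Fin 2) (ZMod ℓ) ⧸
        Subgroup.center (Matrix.SpecialLinearGroup (Fin 2) (ZMod ℓ)) :=
  (QuotientGroup.mk' (Subgroup.center (Matrix.SpecialLinearGroup (Fin 2) (ZMod ℓ)))).comp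
    (Matrix.SpecialLinearGroup.map (n := Fin 2) (PadicInt.toZMod (p := ℓ)))

/-!
Write `Γ(N)` for the principal congruence subgroup of level `N`. Central elements of `SL₂(𝔽_ℓ)` are
squares and have trivial square, so surjectivity onto `PSL₂(𝔽_ℓ)` lifts to `H · Γ(ℓ) = SL₂(ℤ_ℓ)`.
Suppose `h ∈ H` approximates `g = 1 + u` modulo `ℓ`, where `u ^ 2 = 0`. Then `y = h - 1` has `y ^ 2`
divisible by `ℓ`, and in the binomial expansion of `(1 + y) ^ ℓ` the terms between `ℓ * y` and
`y ^ ℓ` vanish modulo `ℓ ^ 2`, as does `y ^ ℓ` itself because `4 ≤ ℓ`. So `h ^ ℓ` agrees with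
`1 + ℓ * u` modulo `ℓ ^ 2`, and inductively `h ^ ℓ ^ m` agrees with `1 + ℓ ^ m * u` modulo
`ℓ ^ (m + 1)`. Since `𝔰𝔩₂` is spanned by matrices of square zero, these powers generate `Γ(ℓ ^ m)`
modulo `Γ(ℓ ^ (m + 1))`. Hence `H` is dense, and being closed it is everything.
-/

section PrimePower

variable {S : Type*} [Ring S]

theorem pow_eq_one_add_natCast_mul_sub_one {g : S} (hg : (g - 1) ^ 2 = 0) (m : ℕ) :
    g ^ m = 1 + m * (g - 1) := by
  induction m with
  | zero => simp
  | succ m ih =>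
    calc g ^ (m + 1) = (1 + m * (g - 1)) * (1 + (g - 1)) := by
          rw [pow_succ, ih, add_sub_cancel]
      _ = 1 + (m + 1) * (g - 1) + m * (g - 1) ^ 2 := by noncomm_ring
      _ = 1 + (m + 1 : ℕ) * (g - 1) := by rw [hg, mul_zero, add_zero, Nat.cast_succ]

theorem pow_sub_one_sq_eq_zero {g : S} (hg : (g - 1) ^ 2 = 0) (m : ℕ) : (g ^ m - 1) ^ 2 = 0 := by
  rw [pow_eq_one_add_natCast_mul_sub_one hg, add_sub_cancel_left,
    (Nat.cast_commute m (g - 1)).mul_pow, hg, mul_zero]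

theorem natCast_sq_dvd_one_add_sub_prod (N : ℕ) (u v w : S) :
    ((N ^ 2 : ℕ) : S) ∣ (1 + N * (u + v + w)) - (1 + N * u) * (1 + N * v) * (1 + N * w) := by
  refine ⟨-(u * v + u * w + v * w + N * (u * v * w)), ?_⟩
  have left_comm (x y : S) : x * (N * y) = N * (x * y) := ((Nat.cast_commute N x).left_comm y).symm
  simp only [sq, Nat.cast_mul, mul_add, add_mul, mul_neg, mul_one, one_mul, mul_assoc, left_comm]
  abel

variable {p N : ℕ}

theorem natCast_mul_dvd_one_add_pow_sub (hp : p.Prime) (hp5 : 5 ≤ p) (hpN : p ∣ N) {y : S}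
    (hy : (N : S) ∣ y ^ 2) : ((p * N : ℕ) : S) ∣ (1 + y) ^ p - (1 + p * y) := by
  have expansion : (1 + y) ^ p - (1 + p * y) =
      y ^ p + p * ∑ k ∈ Finset.Ioo 1 p, y ^ k * ↑(p.choose k / p) := by
    have hIoo : Finset.Ioo 0 p = insert 1 (Finset.Ioo 1 p) := by
      ext k; simp only [Finset.mem_Ioo, Finset.mem_insert]; omega
    rw [add_comm 1 y, (Commute.one_right y).add_pow_prime_eq' hp, hIoo,
      Finset.sum_insert Finset.left_notMem_Ioo]
    simp only [one_pow, mul_one, pow_one, Nat.choose_one_right, Nat.div_self hp.pos, Nat.cast_one,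
      mul_add]
    abel
  have last_term : ((p * N : ℕ) : S) ∣ y ^ p := by
    obtain ⟨v, hv⟩ := hy
    have hy4 : y ^ 4 = ((N * N : ℕ) : S) * (v * v) := by
      rw [pow_mul y 2 2, hv, (Nat.cast_commute N v).mul_pow, Nat.cast_mul, sq, sq]
    calc ((p * N : ℕ) : S) ∣ ((N * N : ℕ) : S) := Nat.cast_dvd_cast (mul_dvd_mul_right hpN N)
      _ ∣ y ^ 4 := hy4 ▸ dvd_mul_right _ _
      _ ∣ y ^ p := pow_dvd_pow y (by omega)
  have middle_terms : (N : S) ∣ ∑ k ∈ Finset.Ioo 1 p, y ^ k * ↑(p.choose k / p) :=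
    Finset.dvd_sum fun k hk ↦
      (hy.trans (pow_dvd_pow y (Finset.mem_Ioo.mp hk).1)).mul_right _
  rw [expansion]
  exact dvd_add last_term (by simpa only [Nat.cast_mul] using mul_dvd_mul_left _ middle_terms)

theorem natCast_mul_dvd_pow_sub_pow (hp : p.Prime) (hp5 : 5 ≤ p) (hpN : p ∣ N) {g h : S}
    (hg : (g - 1) ^ 2 = 0) (hgh : (N : S) ∣ h - g) : ((p * N : ℕ) : S) ∣ h ^ p - g ^ p := by
  obtain ⟨v, hv⟩ := hgh
  have hh : h - 1 = (g - 1) + N * v := by rw [← hv]; abel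
  have hsq : (N : S) ∣ (h - 1) ^ 2 := by
    have : (h - 1) ^ 2 = N * ((g - 1) * v + v * (h - 1)) := by
      calc (h - 1) ^ 2 = (g - 1) ^ 2 + (g - 1) * N * v + N * v * (h - 1) := by
            rw [hh]; noncomm_ring
        _ = N * ((g - 1) * v + v * (h - 1)) := by
            rw [hg, ← (Nat.cast_commute N (g - 1)).eq]; noncomm_ring
    exact this ▸ dvd_mul_right _ _
  have hpow : h ^ p - g ^ p = ((1 + (h - 1)) ^ p - (1 + p * (h - 1))) + (p * N : ℕ) * v := by
    rw [pow_eq_one_add_natCast_mul_sub_one hg, add_sub_cancel, hh, Nat.cast_mul]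
    noncomm_ring
  rw [hpow]
  exact dvd_add (natCast_mul_dvd_one_add_pow_sub hp hp5 hpN hsq) (dvd_mul_right _ _)

theorem natCast_pow_succ_dvd_pow_pow_sub_pow_pow (hp : p.Prime) (hp5 : 5 ≤ p) {g h : S}
    (hg : (g - 1) ^ 2 = 0) (hgh : (p : S) ∣ h - g) (n : ℕ) :
    ((p ^ (n + 1) : ℕ) : S) ∣ h ^ p ^ n - g ^ p ^ n := by
  induction n with
  | zero => simpa using hgh
  | succ n ih =>
    rw [pow_succ' p (n + 1), pow_succ p n, pow_mul, pow_mul]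
    exact natCast_mul_dvd_pow_sub_pow hp hp5 (dvd_pow_self p n.succ_ne_zero)
      (pow_sub_one_sq_eq_zero hg _) ih

end PrimePower

theorem natCast_matrix_dvd_iff {n R : Type*} [DecidableEq n] [Fintype n] [CommRing R] {N : ℕ}
    {A : Matrix n n R} : (N : Matrix n n R) ∣ A ↔ ∀ i j, (N : R) ∣ A i j := by
  have entry (C : Matrix n n R) (i j : n) : ((N : Matrix n n R) * C) i j = N * C i j := by
    rw [← nsmul_eq_mul, Matrix.smul_apply, nsmul_eq_mul]
  constructor
  · rintro ⟨C, rfl⟩ i j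
    exact ⟨C i j, entry C i j⟩
  · intro h
    choose C hC using h
    exact ⟨Matrix.of C, by ext i j; rw [entry, hC, Matrix.of_apply]⟩

section CongruenceSubgroup

variable (n R : Type*) [DecidableEq n] [Fintype n] [CommRing R]

/-- The principal congruence subgroup `Γ(N)` of `SL n R`, where the level is a natural number: the
matrices of determinant `1` congruent to the identity modulo `N`. -/
def congruenceSubgroup (N : ℕ) : Subgroup (Matrix.SpecialLinearGroup n R) :=
  (Matrix.SpecialLinearGroup.map (Ideal.Quotient.mk (Ideal.span {(N : R)}))).ker

instance (N : ℕ) : (congruenceSubgroup n R N).Normal := MonoidHom.normal_ker _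

variable {n R}

theorem inv_mul_mem_ker_map_iff {k : Type*} [CommRing k] {φ : R →+* k}
    {g h : Matrix.SpecialLinearGroup n R} :
    g⁻¹ * h ∈ (Matrix.SpecialLinearGroup.map (n := n) φ).ker ↔
      ∀ i j, h i j - g i j ∈ RingHom.ker φ := by
  rw [← MonoidHom.eq_iff, Matrix.SpecialLinearGroup.ext_iff]
  refine forall₂_congr fun i j ↦ ?_
  rw [RingHom.sub_mem_ker_iff]
  rfl

variable {N : ℕ}

theorem ker_map_eq_congruenceSubgroup {k : Type*} [CommRing k] {φ : R →+* k}
    (hφ : RingHom.ker φ = Ideal.span {(N : R)}) :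
    (Matrix.SpecialLinearGroup.map (n := n) φ).ker = congruenceSubgroup n R N := by
  ext g
  rw [congruenceSubgroup, ← one_mul g, ← inv_one, inv_mul_mem_ker_map_iff,
    inv_mul_mem_ker_map_iff, hφ, Ideal.mk_ker]

theorem inv_mul_mem_congruenceSubgroup_iff {g h : Matrix.SpecialLinearGroup n R} :
    g⁻¹ * h ∈ congruenceSubgroup n R N ↔ (N : Matrix n n R) ∣ (h : Matrix n n R) - g := by
  rw [congruenceSubgroup, inv_mul_mem_ker_map_iff, natCast_matrix_dvd_iff, Ideal.mk_ker]
  simp only [Ideal.mem_span_singleton, Matrix.sub_apply]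

theorem mem_congruenceSubgroup_iff {g : Matrix.SpecialLinearGroup n R} :
    g ∈ congruenceSubgroup n R N ↔ (N : Matrix n n R) ∣ (g : Matrix n n R) - 1 := by
  simpa using inv_mul_mem_congruenceSubgroup_iff (g := 1) (h := g)

theorem congruenceSubgroup_anti {M : ℕ} (h : M ∣ N) :
    congruenceSubgroup n R N ≤ congruenceSubgroup n R M := by
  intro g hg
  rw [mem_congruenceSubgroup_iff] at hg ⊢
  exact (Nat.cast_dvd_cast h).trans hg

theorem mem_sup_congruenceSubgroup_iff {H : Subgroup (Matrix.SpecialLinearGroup n R)}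
    {g : Matrix.SpecialLinearGroup n R} :
    g ∈ H ⊔ congruenceSubgroup n R N ↔
      ∃ h ∈ H, (N : Matrix n n R) ∣ (h : Matrix n n R) - g := by
  simp only [Subgroup.mem_sup_of_normal_right, ← eq_inv_mul_iff_mul_eq, exists_eq_right,
    inv_mul_mem_congruenceSubgroup_iff, dvd_sub_comm]

theorem pow_prime_pow_mem_sup_congruenceSubgroup {p : ℕ} (hp : p.Prime) (hp5 : 5 ≤ p)
    {H : Subgroup (Matrix.SpecialLinearGroup n R)} {g : Matrix.SpecialLinearGroup n R}
    (hg : ((g : Matrix n n R) - 1) ^ 2 = 0) (hgH : g ∈ H ⊔ congruenceSubgroup n R p) (m : ℕ) :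
    g ^ p ^ m ∈ H ⊔ congruenceSubgroup n R (p ^ (m + 1)) := by
  rw [mem_sup_congruenceSubgroup_iff] at hgH ⊢
  obtain ⟨h, hh, hdvd⟩ := hgH
  refine ⟨h ^ p ^ m, H.pow_mem hh _, ?_⟩
  rw [Matrix.SpecialLinearGroup.coe_pow, Matrix.SpecialLinearGroup.coe_pow]
  exact natCast_pow_succ_dvd_pow_pow_sub_pow_pow hp hp5 hg hdvd m

theorem eq_top_of_isClosed_of_sup_congruenceSubgroup_eq_top [TopologicalSpace R]
    (hR : IsAdic (Ideal.span {(N : R)})) {H : Subgroup (Matrix.SpecialLinearGroup n R)}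
    (hcl : IsClosed (H : Set (Matrix.SpecialLinearGroup n R)))
    (hH : ∀ m, H ⊔ congruenceSubgroup n R (N ^ m) = ⊤) : H = ⊤ := by
  refine (Subgroup.eq_top_iff' H).mpr fun g ↦ ?_
  have approx (m : ℕ) : ∃ h ∈ H, ((N ^ m : ℕ) : Matrix n n R) ∣ (h : Matrix n n R) - g :=
    mem_sup_congruenceSubgroup_iff.mp (hH m ▸ Subgroup.mem_top g)
  choose h hmem hdvd using approx
  have hlim : Filter.Tendsto h Filter.atTop (nhds g) := by
    have hind : Topology.IsInducing ((↑) : Matrix.SpecialLinearGroup n R → Matrix n n R) :=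
      .subtypeVal
    refine hind.tendsto_nhds_iff.mpr ?_
    refine tendsto_pi_nhds.mpr fun i ↦ tendsto_pi_nhds.mpr fun j ↦ ?_
    refine (hR.hasBasis_nhds (g i j)).tendsto_right_iff.mpr fun k _ ↦ ?_
    filter_upwards [Filter.eventually_ge_atTop k] with m hkm
    refine ⟨h m i j - g i j, Ideal.pow_le_pow_right hkm ?_, add_sub_cancel _ _⟩
    rw [Ideal.span_singleton_pow, Ideal.mem_span_singleton, ← Nat.cast_pow]
    exact natCast_matrix_dvd_iff.mp (hdvd m) i j
  exact hcl.mem_of_tendsto hlim (Filter.Eventually.of_forall hmem)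

end CongruenceSubgroup

theorem isAdic_span_natCast_padicInt (p : ℕ) [Fact p.Prime] :
    IsAdic (Ideal.span {(p : ℤ_[p])}) := by
  have ball (n : ℕ) : ((Ideal.span {(p : ℤ_[p])} ^ n : Ideal ℤ_[p]) : Set ℤ_[p]) =
      Metric.closedBall 0 ((p : ℝ) ^ (-n : ℤ)) := by
    ext x
    rw [Ideal.span_singleton_pow, SetLike.mem_coe, ← PadicInt.norm_le_pow_iff_mem_span_pow,
      mem_closedBall_zero_iff]
  have hp : (0 : ℝ) < p := Nat.cast_pos.mpr (Fact.out : p.Prime).pos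
  refine isAdic_iff.mpr ⟨fun n ↦ ?_, fun s hs ↦ ?_⟩
  · rw [ball]
    exact IsUltrametricDist.isOpen_closedBall 0 (zpow_pos hp _).ne'
  · obtain ⟨ε, hε, hs⟩ := Metric.mem_nhds_iff.mp hs
    obtain ⟨n, hn⟩ := PadicInt.exists_pow_neg_lt p hε
    exact ⟨n, ball n ▸ (Metric.closedBall_subset_ball hn).trans hs⟩

theorem pow_card_eq_one_of_mem_center {n R : Type*} [DecidableEq n] [Fintype n]
    [CommRing R] {z : Matrix.SpecialLinearGroup n R}
    (hz : z ∈ Subgroup.center (Matrix.SpecialLinearGroup n R)) : z ^ Fintype.card n = 1 := by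
  obtain ⟨r, hr, hrz⟩ := Matrix.SpecialLinearGroup.mem_center_iff.mp hz
  apply Subtype.ext
  rw [Matrix.SpecialLinearGroup.coe_pow, ← hrz, ← map_pow, hr, map_one,
    Matrix.SpecialLinearGroup.coe_one]

section FinTwo

open scoped MatrixGroups

variable {R : Type*} [CommRing R]

/-- The unipotent element `1 + u` of `SL₂(R)` attached to a matrix `u = !![a, b; c, -a]` with
`u ^ 2 = 0`; such `u` span the traceless matrices. -/
def unipotent (a b c : R) (h : a * a + b * c = 0) : SL(2, R) :=
  ⟨1 + !![a, b; c, -a], by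
    rw [one_fin_two, det_fin_two]
    simp only [Matrix.add_apply, of_apply, cons_val', cons_val_zero, cons_val_fin_one,
      cons_val_one, zero_add]
    linear_combination -h⟩

theorem unipotent_sub_one_sq {a b c : R} (h : a * a + b * c = 0) :
    ((unipotent a b c h : Matrix (Fin 2) (Fin 2) R) - 1) ^ 2 = 0 := by
  rw [unipotent, Matrix.SpecialLinearGroup.coe_mk, add_sub_cancel_left, sq, mul_fin_two]
  ext i j
  fin_cases i <;> fin_cases j <;> simp
  · linear_combination h
  · ring
  · ring
  · linear_combination h

theorem coe_unipotent_pow {a b c : R} (h : a * a + b * c = 0) (m : ℕ) :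
    ((unipotent a b c h ^ m : SL(2, R)) : Matrix (Fin 2) (Fin 2) R) =
      1 + m * !![a, b; c, -a] := by
  rw [Matrix.SpecialLinearGroup.coe_pow,
    pow_eq_one_add_natCast_mul_sub_one (unipotent_sub_one_sq h), unipotent,
    Matrix.SpecialLinearGroup.coe_mk, add_sub_cancel_left]

theorem exists_natCast_sq_dvd_sub_one_add_traceless {N : ℕ} {g : SL(2, R)}
    (hg : g ∈ congruenceSubgroup (Fin 2) R N) :
    ∃ a b c : R, ((N ^ 2 : ℕ) : Matrix (Fin 2) (Fin 2) R) ∣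
      (g : Matrix (Fin 2) (Fin 2) R) - (1 + N * !![a, b; c, -a]) := by
  obtain ⟨w, hw⟩ := mem_congruenceSubgroup_iff.mp hg
  have hgw : (g : Matrix (Fin 2) (Fin 2) R) = 1 + (N : R) • w := by
    rw [← sub_eq_iff_eq_add', hw, Nat.cast_smul_eq_nsmul, nsmul_eq_mul]
  have trace_dvd : (N : R) ^ 2 ∣ N * w 1 1 + N * w 0 0 := by
    have hdet := g.det_coe
    rw [hgw, det_fin_two] at hdet
    simp only [Matrix.add_apply, one_apply_eq, Matrix.smul_apply, smul_eq_mul, ne_eq, zero_ne_one,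
      not_false_eq_true, one_apply_ne, zero_add, one_ne_zero] at hdet
    exact ⟨-w.det, by rw [det_fin_two]; linear_combination hdet⟩
  refine ⟨w 0 0, w 0 1, w 1 0, natCast_matrix_dvd_iff.mpr fun i j ↦ ?_⟩
  rw [hgw, ← nsmul_eq_mul, ← Nat.cast_smul_eq_nsmul R]
  fin_cases i <;> fin_cases j <;> simp [trace_dvd]

theorem congruenceSubgroup_le_of_unipotent_pow_mem {N : ℕ} {K : Subgroup SL(2, R)}
    (hpow : ∀ a b c (h : a * a + b * c = 0), unipotent a b c h ^ N ∈ K)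
    (hsq : congruenceSubgroup (Fin 2) R (N ^ 2) ≤ K) : congruenceSubgroup (Fin 2) R N ≤ K := by
  intro g hg
  obtain ⟨a, b, c, habc⟩ := exists_natCast_sq_dvd_sub_one_add_traceless hg
  let g₁ := unipotent a a (-a) (by ring) ^ N
  let g₂ := unipotent 0 (b - a) 0 (by ring) ^ N
  let g₃ := unipotent 0 0 (c + a) (by ring) ^ N
  have hprod : ((N ^ 2 : ℕ) : Matrix (Fin 2) (Fin 2) R) ∣
      (1 + N * !![a, b; c, -a]) - (g₁ * g₂ * g₃ : SL(2, R)) := by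
    have hsum : !![a, b; c, -a] =
        !![a, a; -a, -a] + !![0, b - a; 0, -0] + !![0, 0; c + a, -0] := by
      ext i j
      fin_cases i <;> fin_cases j <;> simp
    rw [Matrix.SpecialLinearGroup.coe_mul, Matrix.SpecialLinearGroup.coe_mul,
      coe_unipotent_pow, coe_unipotent_pow, coe_unipotent_pow, hsum]
    exact natCast_sq_dvd_one_add_sub_prod N _ _ _
  have hmem : g₁ * g₂ * g₃ ∈ K := K.mul_mem (K.mul_mem (hpow ..) (hpow ..)) (hpow ..)
  refine (K.mul_mem_cancel_left (K.inv_mem hmem)).mp (hsq ?_)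
  rw [inv_mul_mem_congruenceSubgroup_iff]
  simpa using dvd_add habc hprod

theorem sup_congruenceSubgroup_prime_pow_eq_top {p : ℕ} (hp : p.Prime) (hp5 : 5 ≤ p)
    {H : Subgroup SL(2, R)} (hH : H ⊔ congruenceSubgroup (Fin 2) R p = ⊤) (m : ℕ) :
    H ⊔ congruenceSubgroup (Fin 2) R (p ^ (m + 1)) = ⊤ := by
  induction m with
  | zero => simpa using hH
  | succ m ih =>
    rw [eq_top_iff, ← ih]
    refine sup_le le_sup_left (congruenceSubgroup_le_of_unipotent_pow_mem (fun a b c h ↦ ?_) ?_)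
    · exact pow_prime_pow_mem_sup_congruenceSubgroup hp hp5 (unipotent_sub_one_sq h)
        (hH ▸ Subgroup.mem_top _) (m + 1)
    · refine (congruenceSubgroup_anti ?_).trans le_sup_right
      rw [← pow_mul]
      exact pow_dvd_pow p (by omega)

theorem exists_sq_eq_of_mem_center (h2 : IsUnit (2 : R)) {z : SL(2, R)}
    (hz : z ∈ Subgroup.center SL(2, R)) : ∃ g, g ^ 2 = z := by
  obtain ⟨r, hr, hrz⟩ := Matrix.SpecialLinearGroup.mem_center_iff.mp hz
  obtain ⟨t, ht⟩ := h2.exists_right_inv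
  rw [Fintype.card_fin] at hr
  -- `e` is idempotent with `2 * e - 1 = r`, and `e + (1 - e) * !![0, 1; -1, 0]` squares to `r`.
  obtain ⟨e, he, her⟩ : ∃ e : R, e * e = e ∧ 2 * e - 1 = r :=
    ⟨t * (1 + r), by linear_combination t ^ 2 * hr + t * (1 + r) * ht, by
      linear_combination (1 + r) * ht⟩
  have hdet : (!![e, 1 - e; -(1 - e), e]).det = 1 := by
    rw [det_fin_two_of]
    linear_combination 2 * he
  have hsq : !![e, 1 - e; -(1 - e), e] ^ 2 = scalar (Fin 2) r := by
    rw [sq, mul_fin_two]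
    ext i j
    fin_cases i <;> fin_cases j <;> simp
    · linear_combination her
    · linear_combination -2 * he
    · linear_combination 2 * he
    · linear_combination her
  exact ⟨(⟨_, hdet⟩ : SL(2, R)), Subtype.ext (hsq.trans hrz)⟩

theorem eq_top_of_map_mk'_center_eq_top (h2 : IsUnit (2 : R)) {K : Subgroup SL(2, R)}
    (hK : K.map (QuotientGroup.mk' (Subgroup.center SL(2, R))) = ⊤) : K = ⊤ := by
  have hsup : K ⊔ Subgroup.center SL(2, R) = ⊤ := by
    rw [← QuotientGroup.ker_mk' (Subgroup.center SL(2, R)), ← Subgroup.comap_map_eq, hK,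
      Subgroup.comap_top]
  suffices Subgroup.center SL(2, R) ≤ K by rwa [sup_eq_left.mpr this] at hsup
  intro z hz
  obtain ⟨g, rfl⟩ := exists_sq_eq_of_mem_center h2 hz
  obtain ⟨x, hx, c, hc, rfl⟩ := Subgroup.mem_sup_of_normal_right.mp (hsup ▸ Subgroup.mem_top g)
  have hxc : Commute x c := Subgroup.mem_center_iff.mp hc x
  have hc2 : c ^ 2 = 1 := pow_card_eq_one_of_mem_center hc
  rw [hxc.mul_pow, hc2, mul_one]
  exact K.pow_mem hx 2

theorem sup_congruenceSubgroup_eq_top_of_map_center {N : ℕ} (hN : Odd N)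
    {k : Type*} [CommRing k] {φ : R →+* k} (hφ : RingHom.ker φ = Ideal.span {(N : R)})
    {H : Subgroup SL(2, R)}
    (hsurj : H.map ((QuotientGroup.mk' (Subgroup.center SL(2, k))).comp
      (Matrix.SpecialLinearGroup.map φ)) = ⊤) :
    H ⊔ congruenceSubgroup (Fin 2) R N = ⊤ := by
  have h2 : IsUnit (2 : k) := by
    obtain ⟨t, ht⟩ := hN
    have hNk : φ N = 0 := RingHom.mem_ker.mp (hφ ▸ Ideal.mem_span_singleton_self _)
    rw [map_natCast, ht] at hNk
    push_cast at hNk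
    exact IsUnit.of_mul_eq_one (-t) (by linear_combination -hNk)
  rw [← Subgroup.map_map] at hsurj
  rw [← ker_map_eq_congruenceSubgroup hφ, ← Subgroup.comap_map_eq,
    eq_top_of_map_mk'_center_eq_top h2 hsurj, Subgroup.comap_top]

theorem closed_subgroup_eq_top_of_surjective_on_PSL_general
    {k : Type*} [TopologicalSpace R] [CommRing k] {p : ℕ} (hp : p.Prime)
    (hp5 : 5 ≤ p) (hR : IsAdic (Ideal.span {(p : R)})) {φ : R →+* k}
    (hφ : RingHom.ker φ = Ideal.span {(p : R)}) {H : Subgroup SL(2, R)}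
    (hcl : IsClosed (H : Set (SL(2, R))))
    (hsurj : H.map ((QuotientGroup.mk' (Subgroup.center SL(2, k))).comp
      (Matrix.SpecialLinearGroup.map φ)) = ⊤) :
    H = ⊤ := by
  have hmod : H ⊔ congruenceSubgroup (Fin 2) R p = ⊤ :=
    sup_congruenceSubgroup_eq_top_of_map_center (hp.odd_of_ne_two (by omega)) hφ hsurj
  refine eq_top_of_isClosed_of_sup_congruenceSubgroup_eq_top hR hcl fun m ↦ ?_
  rw [eq_top_iff, ← sup_congruenceSubgroup_prime_pow_eq_top hp hp5 hmod m]
  exact sup_le_sup_left (congruenceSubgroup_anti (pow_dvd_pow p m.le_succ)) H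

end FinTwo

/-- Let `ℓ ≥ 5` be a prime and `H` a closed subgroup of `SL₂(ℤ_ℓ)` whose image in `PSL₂(𝔽_ℓ)`
under reduction mod `ℓ` is all of `PSL₂(𝔽_ℓ)`.  Then `H = SL₂(ℤ_ℓ)`. -/
theorem closed_subgroup_eq_top_of_surjective_on_PSL
    (ℓ : ℕ) [Fact (Nat.Prime ℓ)] (hℓ : 5 ≤ ℓ)
    (H : Subgroup (Matrix.SpecialLinearGroup (Fin 2) ℤ_[ℓ]))
    (hcl : IsClosed (H : Set (Matrix.SpecialLinearGroup (Fin 2) ℤ_[ℓ])))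
    (hsurj : Subgroup.map (toPSL ℓ) H = ⊤) :
    H = ⊤ :=
  closed_subgroup_eq_top_of_surjective_on_PSL_general Fact.out hℓ (isAdic_span_natCast_padicInt ℓ)
    (PadicInt.ker_toZMod.trans PadicInt.maximalIdeal_eq_span_p) hcl hsurj
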